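/- arXiv:1810.01100 — 2 statements merged into one kernel-verified Lean document; each statement's English description precedes it below -/
import Mathlib

section
/- There exists a family G ⊆ C(ℝ,ℝ) such that K_G contains every nonempty hereditary family ℰ ⊆ CL(ℝ) of closed subsets of ℝ. -/
/-!
For every nonempty closed set `E`, a constant `c E` and a nonzero real `t E` are chosen, and `G`
consists of the functions `c E + t E * b`, where `b` is a bump supported on a rational interval that
meets `E`. If `ℰ` is hereditary and `E ∉ ℰ`, then no `D ∈ ℰ` contains `E`, so some rational interval
meets `E` and misses `D`; hence the constant function `c E` agrees on `D` with a member of `G`, that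
is, it lies in `F_G(ℰ)`.

It remains to ensure that the constant `c E` agrees on `E` with no member of `G`. A function built
from `E` itself differs from `c E` at the points of `E` inside its interval. For functions built from
another set `E'` it suffices that they miss the value `c E` at one fixed point `x E ∈ E`. This is
arranged by transfinite recursion: there are at most continuum many closed sets, so they can be
well-ordered with initial segments of size less than the continuum; at each stage every earlier set
and every rational interval exclude only one value of `c E` and, once `c E` is fixed, one value
of `t E` (`exists_next`).
-/

open Set

/-- The set of continuous real functions `C(ℝ,ℝ)`. -/
def ContFun : Set (ℝ → ℝ) := {f | Continuous f}

/-- The family `CL(ℝ)` of closed subsets of `ℝ`. -/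
def CLR : Set (Set ℝ) := {E | IsClosed E}

/-- The relation `R_G`: `f` agrees on `E` with some member of `G`. -/
def RG (G : Set (ℝ → ℝ)) (f : ℝ → ℝ) (E : Set ℝ) : Prop := ∃ g ∈ G, Set.EqOn f g E

/-- `E_G(F)`: closed sets `E` such that every `f ∈ F` agrees on `E` with some member of `G`. -/
def EG (G F : Set (ℝ → ℝ)) : Set (Set ℝ) := {E | E ∈ CLR ∧ ∀ f ∈ F, RG G f E}

/-- `F_G(ℰ)`: continuous functions agreeing on every `E ∈ ℰ` with some member of `G`. -/
def FG (G : Set (ℝ → ℝ)) (ℰ : Set (Set ℝ)) : Set (ℝ → ℝ) := {f | f ∈ ContFun ∧ ∀ E ∈ ℰ, RG G f E}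

/-- The lattice `K_G` of closed families of closed sets. -/
def KG (G : Set (ℝ → ℝ)) : Set (Set (Set ℝ)) := {ℰ | EG G (FG G ℰ) = ℰ}

/-- The lattice `L_G` of closed families of continuous functions. -/
def LG (G : Set (ℝ → ℝ)) : Set (Set (ℝ → ℝ)) := {F | FG G (EG G F) = F}

/-- The tent-like bump `max 0 ((x - p) (q - x))`, positive exactly on `(p, q)` when `p ≤ q`. For
`p = q` it vanishes identically. -/
def bump (I : ℚ × ℚ) (x : ℝ) : ℝ := max 0 ((x - I.1) * (I.2 - x))

lemma bump_continuous (I : ℚ × ℚ) : Continuous (bump I) := by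
  unfold bump; fun_prop

lemma bump_pos {I : ℚ × ℚ} {x : ℝ} (h1 : (I.1 : ℝ) < x) (h2 : x < I.2) : 0 < bump I x :=
  lt_max_of_lt_right (mul_pos (sub_pos.2 h1) (sub_pos.2 h2))

lemma bump_eq_zero {I : ℚ × ℚ} {x : ℝ} (hI : (I.1 : ℝ) < I.2)
    (h : ¬ ((I.1 : ℝ) < x ∧ x < I.2)) : bump I x = 0 := by
  refine max_eq_left ?_
  by_cases h1 : (I.1 : ℝ) < x
  · have h2 : (I.2 : ℝ) ≤ x := not_lt.1 fun h2 => h ⟨h1, h2⟩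
    nlinarith
  · nlinarith

lemma bump_zero (x : ℝ) : bump (0, 0) x = 0 := by
  refine max_eq_left ?_
  simp only [Rat.cast_zero]
  nlinarith [mul_self_nonneg x]

lemma exists_not_mem_of_lt {S : Set ℝ} (h : Cardinal.mk S < Cardinal.continuum) :
    ∃ a, a ∉ S := by
  by_contra! hS
  rw [Set.eq_univ_of_forall hS, Cardinal.mk_univ_real] at h
  exact h.false

/-- Nonempty closed subsets of the line. -/
abbrev NCl : Type := {E : Set ℝ // IsClosed E ∧ E.Nonempty}

/-- A closed set is determined by the rational intervals that meet it. -/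
lemma mk_NCl_le : Cardinal.mk NCl ≤ Cardinal.continuum := by
  let φ : NCl → Set (ℚ × ℚ) := fun E => {I | ∃ e ∈ E.1, (I.1 : ℝ) < e ∧ e < I.2}
  have key : ∀ E F : NCl, φ E = φ F → E.1 ⊆ F.1 := by
    intro E F h x hx
    by_contra hxF
    obtain ⟨a, b, hab, hs⟩ := mem_nhds_iff_exists_Ioo_subset.1 (F.2.1.isOpen_compl.mem_nhds hxF)
    obtain ⟨p, hp1, hp2⟩ := exists_rat_btwn hab.1
    obtain ⟨q, hq1, hq2⟩ := exists_rat_btwn hab.2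
    have hmem : (p, q) ∈ φ E := ⟨x, hx, hp2, hq1⟩
    rw [h] at hmem
    obtain ⟨e, he, h1, h2⟩ := hmem
    exact hs ⟨hp1.trans h1, h2.trans hq2⟩ he
  have hφ : Function.Injective φ := fun E F h =>
    Subtype.ext ((key E F h).antisymm (key F E h.symm))
  refine (Cardinal.mk_le_of_injective hφ).trans ?_
  rw [Cardinal.mk_set, Cardinal.mk_eq_aleph0, Cardinal.two_power_aleph0]

/-- Transfinite recursion in which the value at `i` has to satisfy a relation with each of the
earlier values. -/
lemma exists_wf_rec {ι α : Type} [Nonempty α] {r : ι → ι → Prop} (hr : WellFounded r)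
    (P : ι → α → ι → α → Prop) (Q : α → Prop)
    (h : ∀ i (prev : ι → α), ∃ d, Q d ∧ ∀ j, r j i → P i d j (prev j)) :
    ∃ F : ι → α, ∀ i, Q (F i) ∧ ∀ j, r j i → P i (F i) j (F j) := by
  classical
  choose step hstep using h
  let F : ι → α := hr.fix fun i rec =>
    step i fun j => if hj : r j i then rec j hj else Classical.arbitrary α
  refine ⟨F, fun i => ?_⟩
  have hF : F i = step i fun j => if r j i then F j else Classical.arbitrary α := by
    have := hr.fix_eq (fun i rec =>
      step i fun j => if hj : r j i then rec j hj else Classical.arbitrary α) i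
    simpa [F] using this
  rw [hF]
  refine ⟨(hstep i _).1, fun j hj => ?_⟩
  have := (hstep i fun j => if r j i then F j else Classical.arbitrary α).2 j hj
  simpa only [if_pos hj] using this

/-- One stage of the recursion: given fewer than continuum many earlier pairs `prev j = (c, t)`, a new
pair exists such that the new constant and the earlier functions, and the earlier constants and
the new functions, differ at the prescribed points. -/
lemma exists_next {ι : Type} (x : ι → ℝ) (S : Set ι) (hS : Cardinal.mk S < Cardinal.continuum)
    (i : ι) (prev : ι → ℝ × ℝ) :
    ∃ d : ℝ × ℝ, d.2 ≠ 0 ∧ ∀ j ∈ S,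
      (∀ I, d.1 ≠ (prev j).1 + (prev j).2 * bump I (x i)) ∧
      (∀ I, (prev j).1 ≠ d.1 + d.2 * bump I (x j)) := by
  have hSJ : Cardinal.mk (S × (ℚ × ℚ)) < Cardinal.continuum := by
    rw [Cardinal.mk_prod, Cardinal.lift_id, Cardinal.lift_id]
    refine Cardinal.mul_lt_of_lt Cardinal.aleph0_le_continuum hS ?_
    rw [Cardinal.mk_eq_aleph0]
    exact Cardinal.aleph0_lt_continuum
  have hrange : ∀ f : S × (ℚ × ℚ) → ℝ, Cardinal.mk (Set.range f) < Cardinal.continuum :=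
    fun f => Cardinal.mk_range_le.trans_lt hSJ
  obtain ⟨c, hc⟩ := exists_not_mem_of_lt
    (hrange fun z => (prev z.1).1 + (prev z.1).2 * bump z.2 (x i))
  have hins : Cardinal.mk (insert (0 : ℝ)
      (Set.range fun z : S × (ℚ × ℚ) => ((prev z.1).1 - c) / bump z.2 (x z.1)) : Set ℝ) <
      Cardinal.continuum :=
    Cardinal.mk_insert_le.trans_lt (Cardinal.add_lt_of_lt Cardinal.aleph0_le_continuum
      (hrange _) (Cardinal.one_lt_aleph0.trans Cardinal.aleph0_lt_continuum))
  obtain ⟨t, ht⟩ := exists_not_mem_of_lt hins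
  have hc' : ∀ j ∈ S, ∀ I, c ≠ (prev j).1 + (prev j).2 * bump I (x i) :=
    fun j hj I h => hc ⟨(⟨j, hj⟩, I), h.symm⟩
  refine ⟨(c, t), fun h => ht (Or.inl h), fun j hj => ⟨hc' j hj, fun I h => ?_⟩⟩
  -- where the bump vanishes, the claim is that the constants differ: use the degenerate interval
  by_cases hb : bump I (x j) = 0
  · have := hc' j hj (0, 0)
    rw [bump_zero] at this
    rw [hb] at h
    apply this
    simp only [mul_zero, add_zero] at h ⊢
    exact h.symm
  · refine ht (Or.inr ⟨(⟨j, hj⟩, I), ?_⟩)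
    simp only at h ⊢
    rw [div_eq_iff hb]
    linarith

lemma exists_choice (x : NCl → ℝ) :
    ∃ F : NCl → ℝ × ℝ, (∀ i, (F i).2 ≠ 0) ∧
      ∀ i j, i ≠ j → ∀ I, (F i).1 ≠ (F j).1 + (F j).2 * bump I (x i) := by
  obtain ⟨r, hr, hord⟩ := Cardinal.exists_ord_eq NCl
  obtain ⟨F, hF⟩ := exists_wf_rec (α := ℝ × ℝ) hr.wf
    (fun i d j e => (∀ I, d.1 ≠ e.1 + e.2 * bump I (x i)) ∧
      (∀ I, e.1 ≠ d.1 + d.2 * bump I (x j))) (fun d => d.2 ≠ 0) (by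
      intro i prev
      refine exists_next x {j | r j i} ?_ i prev
      exact (Cardinal.card_typein_lt (r := r) i hord).trans_le mk_NCl_le)
  refine ⟨F, fun i => (hF i).1, fun i j hij I => ?_⟩
  rcases trichotomous_of r i j with h | h | h
  · exact ((hF j).2 i h).2 I
  · exact absurd h hij
  · exact ((hF i).2 j h).1 I

theorem stmt_5 :
    ∃ G ⊆ ContFun, ∀ ℰ : Set (Set ℝ), ℰ ⊆ CLR → ℰ.Nonempty →
      (∀ D E : Set ℝ, IsClosed D → D ⊆ E → E ∈ ℰ → D ∈ ℰ) → ℰ ∈ KG G := by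
  obtain ⟨F, hF0, hF⟩ := exists_choice fun E => E.2.2.some
  refine ⟨{g | ∃ (E : NCl) (I : ℚ × ℚ), (∃ e ∈ E.1, (I.1 : ℝ) < e ∧ e < I.2) ∧
    g = fun y => (F E).1 + (F E).2 * bump I y}, ?_, ?_⟩
  · rintro g ⟨E, I, -, rfl⟩
    exact continuous_const.add (continuous_const.mul (bump_continuous I))
  intro ℰ hcl hne hher
  refine Set.Subset.antisymm ?_ fun E hE => ⟨hcl hE, fun f hf => hf.2 E hE⟩
  rintro E ⟨hEcl, hE⟩
  by_contra hEℰ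
  have hEne : E.Nonempty := by
    rw [Set.nonempty_iff_ne_empty]
    rintro rfl
    obtain ⟨D, hD⟩ := hne
    exact hEℰ (hher ∅ D isClosed_empty (Set.empty_subset D) hD)
  let i : NCl := ⟨E, hEcl, hEne⟩
  -- the constant function attached to `E` witnesses that `E` is not in the closure of `ℰ`
  obtain ⟨g, ⟨j, I, ⟨e, he, h1, h2⟩, rfl⟩, hg⟩ := hE (fun _ => (F i).1) (by
    refine ⟨continuous_const, fun D hD => ?_⟩
    have hED : ¬ E ⊆ D := fun h => hEℰ (hher E D hEcl h hD)
    obtain ⟨e, heE, heD⟩ := Set.not_subset.1 hED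
    obtain ⟨a, b, hab, hs⟩ :=
      mem_nhds_iff_exists_Ioo_subset.1 ((hcl hD : IsClosed D).isOpen_compl.mem_nhds heD)
    obtain ⟨p, hp1, hp2⟩ := exists_rat_btwn hab.1
    obtain ⟨q, hq1, hq2⟩ := exists_rat_btwn hab.2
    refine ⟨_, ⟨i, (p, q), ⟨e, heE, hp2, hq1⟩, rfl⟩, fun y hy => ?_⟩
    have hb : bump (p, q) y = 0 := bump_eq_zero (hp2.trans hq1)
      fun h => hs ⟨hp1.trans h.1, h.2.trans hq2⟩ hy
    simp [hb])
  by_cases hij : i = j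
  · subst hij
    have h := hg he
    have hb := (bump_pos h1 h2).ne'
    have : (F i).2 * bump I e = 0 := by simp only at h; linarith
    exact (mul_ne_zero (hF0 i) hb) this
  · exact hF i j hij I (hg hEne.some_mem)
end

section
/- Let G ⊆ C(ℝ,ℝ) be nonempty. The following are equivalent: (1) K_G ⊆ {CL(ℝ) ∩ P(X) : X ⊆ ℝ}; (2) G is complete and connected, i.e., every continuous g : ℝ → ℝ whose graph is contained in ⋃{graph of h : h ∈ G} belongs to G, and for any f, g ∈ G and any x ≠ y in ℝ there exists h ∈ G with h(x) = f(x) and h(y) = g(y). -/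
/-!
The members of `K_G` are the families `E_G(F)`, and singletons are closed, so the first condition
says that agreement with members of `G` on closed sets can be tested pointwise. Applied to
`F = {f}`, this gives completeness (test on all of `ℝ`) and connectedness (test a line through two
points of `⋃G` on a two-point set).

Conversely, let `G` be complete and connected, `E` closed, and `f` continuous with
`(x, f x) ∈ ⋃G` for `x ∈ E`; a member of `G` extending `f↾E` is needed (`exists_extension`). By
completeness `G` is a lattice and is stable under gluing. One may assume that `E` is unbounded on
both sides. On every gap `(a, b)` of `E` use a member of `G` with the prescribed values at `a` and
`b` whose deviation from `f a` on `[a, b]` is minimal up to `b - a` (`exists_near_minimal`). The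
resulting function has its graph in `⋃G`, so only continuity is at stake, and only at points `x`
where gaps accumulate. There `exists_gap_close` applies: if `h ∈ G` passes through `(x, f x)`, then
the two ends of a nearby gap are joined by a member of `G` that runs quickly from one end to `h`,
follows `h`, and runs quickly to the other end. Truncating between lattice combinations with `h`
(`exists_switch`) keeps it near `f x`, so the deviations of the chosen functions tend to `0`.
-/


open Set

/-- A family of continuous functions is complete if it contains every continuous function
whose graph is contained in the union of the graphs of its members. -/
def FamComplete (G : Set (ℝ → ℝ)) : Prop :=
  ∀ f : ℝ → ℝ, Continuous f → (∀ x : ℝ, ∃ g ∈ G, g x = f x) → f ∈ G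

/-- A family of functions is connected if any pair of values of its members at two distinct
points is interpolated by a member. -/
def FamConnected (G : Set (ℝ → ℝ)) : Prop :=
  ∀ f ∈ G, ∀ g ∈ G, ∀ x y : ℝ, x ≠ y → ∃ h ∈ G, h x = f x ∧ h y = g y

section Helpers

variable {G : Set (ℝ → ℝ)}

theorem FamComplete.glue_mem (hG : G ⊆ ContFun) (hc : FamComplete G) {g₁ g₂ : ℝ → ℝ} (h₁ : g₁ ∈ G)
    (h₂ : g₂ ∈ G) {m : ℝ} (hm : g₁ m = g₂ m) : (fun t => if t ≤ m then g₁ t else g₂ t) ∈ G := by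
  have c₁ : Continuous g₁ := hG h₁
  have c₂ : Continuous g₂ := hG h₂
  refine hc _ (Continuous.if_le c₁ c₂ continuous_id continuous_const ?_) fun x => ?_
  · rintro x rfl
    exact hm
  · by_cases hx : x ≤ m
    · exact ⟨g₁, h₁, by simp [hx]⟩
    · exact ⟨g₂, h₂, by simp [hx]⟩

/-- Two members of `G` can be switched between two distinct points without leaving the region
between their graphs. -/
theorem exists_switch (hG : G ⊆ ContFun) (hc : FamComplete G) (hn : FamConnected G)
    {h k : ℝ → ℝ} (hh : h ∈ G) (hk : k ∈ G) {p q : ℝ} (hpq : p ≠ q) :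
    ∃ j ∈ G, j p = k p ∧ j q = h q ∧
      ∀ t, min (h t) (k t) ≤ j t ∧ j t ≤ max (h t) (k t) := by
  obtain ⟨j, hj, hjp, hjq⟩ := hn k hk h hh p q hpq
  have ch : Continuous h := hG hh
  have ck : Continuous k := hG hk
  have cj : Continuous j := hG hj
  refine ⟨fun t => max (min (h t) (k t)) (min (j t) (max (h t) (k t))),
    hc _ (by fun_prop) fun x => ?_, ?_, ?_, fun t => ⟨le_max_left _ _, ?_⟩⟩
  · rcases max_choice (min (h x) (k x)) (min (j x) (max (h x) (k x))) with e | e <;> rw [e]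
    · rcases min_choice (h x) (k x) with e | e <;> rw [e]
      exacts [⟨h, hh, rfl⟩, ⟨k, hk, rfl⟩]
    · rcases min_choice (j x) (max (h x) (k x)) with e | e <;> rw [e]
      · exact ⟨j, hj, rfl⟩
      · rcases max_choice (h x) (k x) with e | e <;> rw [e]
        exacts [⟨h, hh, rfl⟩, ⟨k, hk, rfl⟩]
  · simp [hjp]
  · simp [hjq]
  · exact max_le (min_le_max) (min_le_right _ _)

/-- If some `h ∈ G` stays `η`-close to `c` on `[a, b]`, then any two values of `⋃G` over `a` and `b`
that are `η`-close to `c` are joined by a member of `G` that stays `η`-close to `c` on `[a, b]`. -/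
theorem exists_gap_close (hG : G ⊆ ContFun) (hc : FamComplete G) (hn : FamConnected G)
    {h k₀ k₁ : ℝ → ℝ} (hh : h ∈ G) (hk₀ : k₀ ∈ G) (hk₁ : k₁ ∈ G) {a b c η : ℝ} (hab : a < b)
    (h0 : |k₀ a - c| < η) (h1 : |k₁ b - c| < η) (hη : ∀ t ∈ Icc a b, |h t - c| < η) :
    ∃ k ∈ G, k a = k₀ a ∧ k b = k₁ b ∧ ∀ t ∈ Icc a b, |k t - c| < η := by
  have c₀ : Continuous k₀ := hG hk₀
  have c₁ : Continuous k₁ := hG hk₁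
  have e₀ : ∀ᶠ t in nhds a, |k₀ t - c| < η :=
    (Continuous.continuousAt (by fun_prop)).eventually_lt continuousAt_const h0
  have e₁ : ∀ᶠ t in nhds b, |k₁ t - c| < η :=
    (Continuous.continuousAt (by fun_prop)).eventually_lt continuousAt_const h1
  obtain ⟨d₀, hd₀, H₀⟩ := Metric.eventually_nhds_iff.1 e₀
  obtain ⟨d₁, hd₁, H₁⟩ := Metric.eventually_nhds_iff.1 e₁
  -- On a collar of width `d` at each end, `k₀` and `k₁` are `η`-close to `c`.
  obtain ⟨d, hd, hdl⟩ : ∃ d > 0, d < min (min d₀ d₁) ((b - a) / 2) :=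
    exists_between (lt_min (lt_min hd₀ hd₁) (by linarith))
  simp only [lt_min_iff] at hdl
  obtain ⟨⟨hl0, hl1⟩, hl2⟩ := hdl
  obtain ⟨j₀, hj₀, ja, jm, jb⟩ := exists_switch hG hc hn hh hk₀ (p := a) (q := a + d)
    (by linarith)
  obtain ⟨j₁, hj₁, ja', jm', jb'⟩ := exists_switch hG hc hn hh hk₁ (p := b) (q := b - d)
    (by linarith)
  have g1 := FamComplete.glue_mem hG hc hh hj₁ (m := b - d) jm'.symm
  have g2 := FamComplete.glue_mem hG hc hj₀ g1 (m := a + d) (by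
    have : a + d ≤ b - d := by linarith
    simp [this, jm])
  refine ⟨_, g2, ?_, ?_, ?_⟩
  · have : a ≤ a + d := by linarith
    simp [this, ja]
  · have h1 : ¬ b ≤ a + d := by linarith
    have h2 : ¬ b ≤ b - d := by linarith
    simp [h1, h2, ja']
  · intro t ht
    have hht := abs_lt.1 (hη t ht)
    rw [abs_lt]
    by_cases h1 : t ≤ a + d
    · simp only [h1, if_true]
      have := abs_lt.1 (H₀ (y := t) (by rw [Real.dist_eq, abs_lt]; constructor <;> linarith [ht.1]))
      obtain ⟨u, v⟩ := jb t
      rcases min_le_iff.1 u with u | u <;> rcases le_max_iff.1 v with v | v <;>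
        constructor <;> linarith
    · by_cases h2 : t ≤ b - d
      · simpa only [h1, h2, if_true, if_false] using hht
      · simp only [h1, h2, if_false]
        have := abs_lt.1
          (H₁ (y := t) (by rw [Real.dist_eq, abs_lt]; constructor <;> linarith [ht.2]))
        obtain ⟨u, v⟩ := jb' t
        rcases min_le_iff.1 u with u | u <;> rcases le_max_iff.1 v with v | v <;>
          constructor <;> linarith

/-- Among the members of `G` with prescribed values at `a` and `b`, one has deviation from `f a` on
`[a, b]` minimal up to an error `b - a`. -/
theorem exists_near_minimal (hG : G ⊆ ContFun) (hn : FamConnected G) {f : ℝ → ℝ} {a b : ℝ}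
    (hab : a ≤ b) (ha : ∃ g ∈ G, g a = f a) (hb : ∃ g ∈ G, g b = f b) :
    ∃ k ∈ G, k a = f a ∧ k b = f b ∧ ∀ k' ∈ G, k' a = f a → k' b = f b → ∀ r,
      (∀ t ∈ Icc a b, |k' t - f a| ≤ r) → ∀ t ∈ Icc a b, |k t - f a| ≤ r + (b - a) := by
  obtain ⟨g₀, hg₀, e₀⟩ := ha
  obtain ⟨g₁, hg₁, e₁⟩ := hb
  rcases hab.eq_or_lt with rfl | hlt
  · refine ⟨g₀, hg₀, e₀, e₀, fun k' _ _ _ r hr t ht => ?_⟩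
    have hta : t = a := le_antisymm ht.2 ht.1
    subst hta
    have := (abs_nonneg _).trans (hr t ht)
    simpa [e₀] using this
  · let S : Set ℝ := {r | ∃ k ∈ G, k a = f a ∧ k b = f b ∧ ∀ t ∈ Icc a b, |k t - f a| ≤ r}
    have hS : S.Nonempty := by
      obtain ⟨k, hk, ka, kb⟩ := hn g₀ hg₀ g₁ hg₁ a b hlt.ne
      have ck : Continuous k := hG hk
      obtain ⟨M, hM⟩ := (isCompact_Icc (a := a) (b := b)).exists_bound_of_continuousOn
        (f := fun t => k t - f a) (by fun_prop)
      exact ⟨M, k, hk, ka.trans e₀, kb.trans e₁, hM⟩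
    have hB : BddBelow S :=
      ⟨0, fun r ⟨k, _, _, _, hr⟩ => (abs_nonneg _).trans (hr a (left_mem_Icc.2 hab))⟩
    obtain ⟨r, ⟨k, hk, ka, kb, hr⟩, hlt'⟩ :=
      exists_lt_of_csInf_lt hS (show sInf S < sInf S + (b - a) by linarith)
    refine ⟨k, hk, ka, kb, fun k' hk' ka' kb' r' hr' t ht => ?_⟩
    have : sInf S ≤ r' := csInf_le hB ⟨k', hk', ka', kb', hr'⟩
    linarith [hr t ht]

theorem exists_extension_of_unbounded (hG : G ⊆ ContFun) (hc : FamComplete G)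
    (hn : FamConnected G) {f : ℝ → ℝ} (hf : Continuous f) {E : Set ℝ} (hE : IsClosed E)
    (hV : ∀ x ∈ E, ∃ g ∈ G, g x = f x) (hup : ∀ t, ∃ e ∈ E, t ≤ e) (hdn : ∀ t, ∃ e ∈ E, e ≤ t) :
    ∃ g ∈ G, EqOn f g E := by
  -- `a t` and `b t` are the nearest points of `E` to the left and right of `t`.
  have hA : ∀ t, ∃ a ∈ E, a ≤ t ∧ ∀ e ∈ E, e ≤ t → e ≤ a := fun t => by
    have hbdd : BddAbove (E ∩ Iic t) := ⟨t, fun x hx => hx.2⟩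
    obtain ⟨e, he, het⟩ := hdn t
    have := (hE.inter isClosed_Iic).csSup_mem ⟨e, he, het⟩ hbdd
    exact ⟨_, this.1, this.2, fun e he het => le_csSup hbdd ⟨he, het⟩⟩
  have hB : ∀ t, ∃ b ∈ E, t ≤ b ∧ ∀ e ∈ E, t ≤ e → b ≤ e := fun t => by
    have hbdd : BddBelow (E ∩ Ici t) := ⟨t, fun x hx => hx.2⟩
    obtain ⟨e, he, het⟩ := hup t
    have := (hE.inter isClosed_Ici).csInf_mem ⟨e, he, het⟩ hbdd
    exact ⟨_, this.1, this.2, fun e he het => csInf_le hbdd ⟨he, het⟩⟩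
  choose a aE at_le a_max using hA
  choose b bE le_bt b_min using hB
  have hK : ∀ p q, ∃ k : ℝ → ℝ, p ∈ E → q ∈ E → p ≤ q →
      k ∈ G ∧ k p = f p ∧ k q = f q ∧ ∀ k' ∈ G, k' p = f p → k' q = f q → ∀ r,
      (∀ t ∈ Icc p q, |k' t - f p| ≤ r) → ∀ t ∈ Icc p q, |k t - f p| ≤ r + (q - p) := by
    intro p q
    by_cases h : p ∈ E ∧ q ∈ E ∧ p ≤ q
    · obtain ⟨k, h1, h2⟩ := exists_near_minimal hG hn h.2.2 (hV p h.1) (hV q h.2.1)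
      exact ⟨k, fun _ _ _ => ⟨h1, h2⟩⟩
    · exact ⟨f, fun h1 h2 h3 => (h ⟨h1, h2, h3⟩).elim⟩
  choose K hK using hK
  have hKt := fun t => hK (a t) (b t) (aE t) (bE t) ((at_le t).trans (le_bt t))
  obtain ⟨g, hg⟩ : ∃ g : ℝ → ℝ, ∀ t, g t = K (a t) (b t) t := ⟨_, fun t => rfl⟩
  have hgE : ∀ t ∈ E, g t = f t := fun t ht => by
    have h1 : a t = t := le_antisymm (at_le t) (a_max t t ht le_rfl)
    have := (hKt t).2.1
    rw [h1] at this
    rw [hg, h1, this]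
  -- On the closure of each gap, `g` is the function chosen for that gap.
  have hgap : ∀ s t, t ∈ Icc (a s) (b s) → g t = K (a s) (b s) t := fun s t ht => by
    rcases ht.1.eq_or_lt with h1 | h1
    · rw [← h1, hgE _ (aE s), (hKt s).2.1]
    rcases ht.2.eq_or_lt with h2 | h2
    · rw [h2, hgE _ (bE s), (hKt s).2.2.1]
    have ha : a t = a s := by
      refine le_antisymm (a_max s _ (aE t) ?_) (a_max t _ (aE s) h1.le)
      by_contra! h
      linarith [b_min s _ (aE t) h.le, at_le t]
    have hb : b t = b s := by
      refine le_antisymm (b_min t _ (bE s) h2.le) (b_min s _ (bE t) ?_)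
      by_contra! h
      linarith [a_max s _ (bE t) h.le, le_bt t]
    rw [hg, ha, hb]
  -- Near-minimality makes `g` close to `f t₀` on all gaps that lie close to `t₀ ∈ E`.
  have hclose : ∀ t₀ ∈ E, ∀ ε > 0, ∃ δ > 0, ∀ t, t₀ - δ < a t → b t < t₀ + δ →
      |g t - f t₀| < ε := by
    intro t₀ ht₀ ε hε
    obtain ⟨h, hh, het⟩ := hV t₀ ht₀
    have ch : Continuous h := hG hh
    have e1 : ∀ᶠ t in nhds t₀, |h t - f t₀| < ε / 4 :=
      (Continuous.continuousAt (by fun_prop)).eventually_lt continuousAt_const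
        (by simp [het, hε])
    have e2 : ∀ᶠ t in nhds t₀, |f t - f t₀| < ε / 4 :=
      (Continuous.continuousAt (by fun_prop)).eventually_lt continuousAt_const (by simp [hε])
    obtain ⟨d, hd, H⟩ := Metric.eventually_nhds_iff.1 (e1.and e2)
    refine ⟨min d (ε / 8), by positivity, fun t hat hbt => ?_⟩
    have m1 := min_le_left d (ε / 8)
    have m2 := min_le_right d (ε / 8)
    have H' : ∀ s ∈ Icc (a t) (b t), |h s - f t₀| < ε / 4 ∧ |f s - f t₀| < ε / 4 := fun s hs =>
      H (by rw [Real.dist_eq, abs_lt]; constructor <;> linarith [hs.1, hs.2])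
    have hab := (at_le t).trans (le_bt t)
    have ha := (H' (a t) (left_mem_Icc.2 hab)).2
    rcases hab.eq_or_lt with hab' | hab'
    · have : t = a t := le_antisymm (by rw [hab']; exact le_bt t) (at_le t)
      rw [this, hgE _ (aE t)]
      linarith
    · obtain ⟨k₀, hk₀, ek₀⟩ := hV _ (aE t)
      obtain ⟨k₁, hk₁, ek₁⟩ := hV _ (bE t)
      obtain ⟨k, hk, ka, kb, hkc⟩ := exists_gap_close hG hc hn hh hk₀ hk₁ hab' (c := f t₀)
        (by rw [ek₀]; exact ha) (by rw [ek₁]; exact (H' (b t) (right_mem_Icc.2 hab)).2)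
        fun s hs => (H' s hs).1
      have key := (hKt t).2.2.2 k hk (ka.trans ek₀) (kb.trans ek₁) (ε / 2) (fun s hs => by
        have := abs_lt.1 (hkc s hs)
        have := abs_lt.1 ha
        rw [abs_le]
        constructor <;> linarith) t ⟨at_le t, le_bt t⟩
      rw [← hg] at key
      have := abs_le.1 key
      have := abs_lt.1 ha
      rw [abs_lt]
      constructor <;> linarith
  have hcont : Continuous g := by
    rw [continuous_iff_continuousAt]
    intro t₀
    have cK : ∀ s, Continuous (K (a s) (b s)) := fun s => hG (hKt s).1
    by_cases ht₀ : t₀ ∈ E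
    · rw [continuousAt_iff_continuous_left_right]
      constructor
      · by_cases hs : ∃ s < t₀, t₀ ≤ b s
        · obtain ⟨s, hst, hs⟩ := hs
          have hbs : b s = t₀ := le_antisymm (b_min s _ ht₀ hst.le) hs
          have has : a s < t₀ := (at_le s).trans_lt hst
          refine (cK s).continuousWithinAt.congr_of_eventuallyEq ?_
            (hgap s t₀ ⟨has.le, hbs.ge⟩)
          filter_upwards [inter_mem_nhdsWithin (Iic t₀) (Ioi_mem_nhds has)] with t ht
          exact hgap s t ⟨ht.2.le, ht.1.trans hbs.ge⟩
        · push Not at hs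
          rw [ContinuousWithinAt, Metric.tendsto_nhds]
          intro ε hε
          obtain ⟨δ, hδ, H⟩ := hclose t₀ ht₀ ε hε
          have h1 := hs (t₀ - δ / 2) (by linarith)
          have h2 := le_bt (t₀ - δ / 2)
          filter_upwards [inter_mem_nhdsWithin (Iic t₀) (Ioi_mem_nhds h1)] with t ht
          rw [Real.dist_eq, hgE t₀ ht₀]
          have h3 := a_max t _ (bE _) (le_of_lt ht.2)
          have h4 := b_min t _ ht₀ ht.1
          exact H t (by linarith) (by linarith)
      · by_cases hs : ∃ s > t₀, a s ≤ t₀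
        · obtain ⟨s, hst, hs⟩ := hs
          have has : a s = t₀ := le_antisymm hs (a_max s _ ht₀ (le_of_lt hst))
          have hbs : t₀ < b s := lt_of_lt_of_le hst (le_bt s)
          refine (cK s).continuousWithinAt.congr_of_eventuallyEq ?_
            (hgap s t₀ ⟨has.le, hbs.le⟩)
          filter_upwards [inter_mem_nhdsWithin (Ici t₀) (Iio_mem_nhds hbs)] with t ht
          exact hgap s t ⟨has.le.trans ht.1, ht.2.le⟩
        · push Not at hs
          rw [ContinuousWithinAt, Metric.tendsto_nhds]
          intro ε hε
          obtain ⟨δ, hδ, H⟩ := hclose t₀ ht₀ ε hε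
          have h1 := hs (t₀ + δ / 2) (by linarith)
          have h2 := at_le (t₀ + δ / 2)
          filter_upwards [inter_mem_nhdsWithin (Ici t₀) (Iio_mem_nhds h1)] with t ht
          rw [Real.dist_eq, hgE t₀ ht₀]
          have h3 := b_min t _ (aE _) (le_of_lt ht.2)
          have h4 := a_max t _ ht₀ ht.1
          exact H t (by linarith) (by linarith)
    · have h1 : a t₀ < t₀ := (at_le t₀).lt_of_ne fun h => ht₀ (h ▸ aE t₀)
      have h2 : t₀ < b t₀ := (le_bt t₀).lt_of_ne fun h => ht₀ (h ▸ bE t₀)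
      refine (cK t₀).continuousAt.congr ?_
      filter_upwards [Ioo_mem_nhds h1 h2] with t ht
      exact (hgap t₀ t ⟨ht.1.le, ht.2.le⟩).symm
  exact ⟨g, hc g hcont fun x => ⟨_, (hKt x).1, (hg x).symm⟩, fun t ht => (hgE t ht).symm⟩

/-- A closed set bounded above is enlarged by the ray beyond its maximum, on which `f` is replaced
by a member of `G`. -/
theorem exists_enlarge_up (hG : G ⊆ ContFun) {f : ℝ → ℝ} (hf : Continuous f) {E : Set ℝ}
    (hE : IsClosed E) (hne : E.Nonempty) (hV : ∀ x ∈ E, ∃ g ∈ G, g x = f x) :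
    ∃ E' f', E ⊆ E' ∧ IsClosed E' ∧ Continuous f' ∧ EqOn f f' E ∧
      (∀ x ∈ E', ∃ g ∈ G, g x = f' x) ∧ ∀ t, ∃ e ∈ E', t ≤ e := by
  by_cases hb : BddAbove E
  · have hm := hE.csSup_mem hne hb
    have hle : ∀ x ∈ E, x ≤ sSup E := fun x hx => le_csSup hb hx
    generalize sSup E = m at hm hle
    obtain ⟨h, hh, hhm⟩ := hV m hm
    have ch : Continuous h := hG hh
    refine ⟨E ∪ Ici m, fun t => if t ≤ m then f t else h t, subset_union_left,
      hE.union isClosed_Ici, Continuous.if_le hf ch continuous_id continuous_const ?_, ?_, ?_, ?_⟩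
    · rintro x rfl
      exact hhm.symm
    · intro x hx
      simp [hle x hx]
    · intro x hx
      by_cases hxm : x ≤ m
      · have hxE : x ∈ E := hx.elim id fun h => (le_antisymm hxm h) ▸ hm
        simpa [hxm] using hV x hxE
      · exact ⟨h, hh, by simp [hxm]⟩
    · exact fun t => ⟨max t m, Or.inr (mem_Ici.2 (le_max_right _ _)), le_max_left _ _⟩
  · refine ⟨E, f, Subset.rfl, hE, hf, fun _ _ => rfl, hV, fun t => ?_⟩
    obtain ⟨e, he, hte⟩ := not_bddAbove_iff.1 hb t
    exact ⟨e, he, hte.le⟩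

theorem exists_enlarge_down (hG : G ⊆ ContFun) {f : ℝ → ℝ} (hf : Continuous f) {E : Set ℝ}
    (hE : IsClosed E) (hne : E.Nonempty) (hV : ∀ x ∈ E, ∃ g ∈ G, g x = f x) :
    ∃ E' f', E ⊆ E' ∧ IsClosed E' ∧ Continuous f' ∧ EqOn f f' E ∧
      (∀ x ∈ E', ∃ g ∈ G, g x = f' x) ∧ ∀ t, ∃ e ∈ E', e ≤ t := by
  by_cases hb : BddBelow E
  · have hm := hE.csInf_mem hne hb
    have hle : ∀ x ∈ E, sInf E ≤ x := fun x hx => csInf_le hb hx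
    generalize sInf E = m at hm hle
    obtain ⟨h, hh, hhm⟩ := hV m hm
    have ch : Continuous h := hG hh
    refine ⟨E ∪ Iic m, fun t => if m ≤ t then f t else h t, subset_union_left,
      hE.union isClosed_Iic, Continuous.if_le hf ch continuous_const continuous_id ?_, ?_, ?_, ?_⟩
    · rintro x rfl
      exact hhm.symm
    · intro x hx
      simp [hle x hx]
    · intro x hx
      by_cases hxm : m ≤ x
      · have hxE : x ∈ E := hx.elim id fun h => (le_antisymm hxm h) ▸ hm
        simpa [hxm] using hV x hxE
      · exact ⟨h, hh, by simp [hxm]⟩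
    · exact fun t => ⟨min t m, Or.inr (mem_Iic.2 (min_le_right _ _)), min_le_left _ _⟩
  · refine ⟨E, f, Subset.rfl, hE, hf, fun _ _ => rfl, hV, fun t => ?_⟩
    obtain ⟨e, he, hte⟩ := not_bddBelow_iff.1 hb t
    exact ⟨e, he, hte.le⟩

theorem exists_extension (hG : G ⊆ ContFun) (hne : G.Nonempty) (hc : FamComplete G)
    (hn : FamConnected G) {f : ℝ → ℝ} (hf : Continuous f) {E : Set ℝ} (hE : IsClosed E)
    (hV : ∀ x ∈ E, ∃ g ∈ G, g x = f x) : RG G f E := by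
  rcases E.eq_empty_or_nonempty with rfl | hEne
  · obtain ⟨g, hg⟩ := hne
    exact ⟨g, hg, fun x hx => hx.elim⟩
  obtain ⟨E₁, f₁, s₁, hE₁, hf₁, e₁, V₁, up₁⟩ := exists_enlarge_up hG hf hE hEne hV
  obtain ⟨E₂, f₂, s₂, hE₂, hf₂, e₂, V₂, dn₂⟩ := exists_enlarge_down hG hf₁ hE₁ (hEne.mono s₁) V₁
  obtain ⟨g, hg, e⟩ := exists_extension_of_unbounded hG hc hn hf₂ hE₂ V₂
    (fun t => (up₁ t).imp fun e he => ⟨s₂ he.1, he.2⟩) dn₂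
  exact ⟨g, hg, fun x hx => (e₁ hx).trans ((e₂ (s₁ hx)).trans (e (s₂ (s₁ hx))))⟩

theorem EG_mem_KG {F : Set (ℝ → ℝ)} (hF : F ⊆ ContFun) : EG G F ∈ KG G := by
  refine Subset.antisymm (fun E hE => ⟨hE.1, fun f hf => hE.2 f ⟨hF hf, fun E' hE' => hE'.2 f hf⟩⟩)
    fun E hE => ⟨hE.1, fun f hf => hf.2 E hE⟩

/-- Under the first condition, agreement with members of `G` at each point of a closed set gives
agreement with one member of `G` on the whole set. -/
theorem RG_of_pointwise (H : KG G ⊆ {𝒜 | ∃ X : Set ℝ, 𝒜 = {E | IsClosed E ∧ E ⊆ X}})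
    {f : ℝ → ℝ} (hf : Continuous f) {E : Set ℝ} (hE : IsClosed E)
    (hV : ∀ x ∈ E, ∃ g ∈ G, g x = f x) : RG G f E := by
  obtain ⟨X, hX⟩ := H (EG_mem_KG (G := G) (F := {f}) (by rintro _ rfl; exact hf))
  have hEX : E ⊆ X := fun x hx => by
    have hx' : ({x} : Set ℝ) ∈ EG G {f} := by
      refine ⟨isClosed_singleton, ?_⟩
      rintro _ rfl
      obtain ⟨g, hg, e⟩ := hV x hx
      refine ⟨g, hg, ?_⟩
      rintro _ rfl
      exact e.symm
    rw [hX] at hx'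
    exact hx'.2 rfl
  have : E ∈ EG G {f} := by
    rw [hX]
    exact ⟨hE, hEX⟩
  exact this.2 f rfl

end Helpers

theorem stmt_15 (G : Set (ℝ → ℝ)) (hG : G ⊆ ContFun) (hne : G.Nonempty) :
    (KG G ⊆ {𝒜 | ∃ X : Set ℝ, 𝒜 = {E | IsClosed E ∧ E ⊆ X}}) ↔
    (FamComplete G ∧ FamConnected G) := by
  constructor
  · intro H
    refine ⟨fun f hf hV => ?_, fun f hf g hg x y hxy => ?_⟩
    · obtain ⟨g, hg, e⟩ := RG_of_pointwise H hf isClosed_univ fun x _ => hV x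
      have : f = g := funext fun x => e (mem_univ x)
      exact this ▸ hg
    · let φ : ℝ → ℝ := fun t => f x + (g y - f x) / (y - x) * (t - x)
      have hφx : φ x = f x := by simp [φ]
      have hφy : φ y = g y := by
        have : y - x ≠ 0 := sub_ne_zero.2 hxy.symm
        simp only [φ]
        field_simp
        ring
      obtain ⟨h, hh, e⟩ := RG_of_pointwise H (f := φ) (E := {x, y}) (by fun_prop)
        (Set.toFinite _).isClosed (by
          rintro z (rfl | rfl)
          exacts [⟨f, hf, hφx.symm⟩, ⟨g, hg, hφy.symm⟩])
      exact ⟨h, hh, by rw [← e (by simp), hφx], by rw [← e (by simp), hφy]⟩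
  · rintro ⟨hc, hn⟩ ℰ hℰ
    have hℰ' : EG G (FG G ℰ) = ℰ := hℰ
    refine ⟨⋃₀ ℰ, Subset.antisymm (fun E hE => ⟨?_, subset_sUnion_of_mem hE⟩) ?_⟩
    · rw [← hℰ'] at hE
      exact hE.1
    · rintro E ⟨hE, hEX⟩
      rw [← hℰ']
      refine ⟨hE, fun f hf => exists_extension hG hne hc hn hf.1 hE fun x hx => ?_⟩
      obtain ⟨E', hE', hx'⟩ := hEX hx
      obtain ⟨g, hg, e⟩ := hf.2 E' hE'
      exact ⟨g, hg, (e hx').symm⟩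
end
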